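/- Viewing the threshold k = k(λ0, λ1) as a function of λ1 with λ0 and all other parameters fixed, k(λ0, λ1) tends to k1 := [−δ1 + γ2(1−a0)] / [1 − δ1 + (γ2−1)(1−a1)] · (β_s/β_b) as λ1 → ∞ (limit along the filter atTop); moreover k1 > k0 := (−δ1/(1−δ1)) · (β_s/β_b). -/

import Mathlib

/-!
The roots `δ1` and `γ2` of `σ x (x - m) = ρ - μ1` and `σ x (x - m) = ρ + λ0 - μ1` satisfy
`-δ1 + γ2 (1 - a0) = -δ1 (γ2 - δ1) / (γ2 - m)`. The shift `x ↦ x - 1` turns these equations into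
the ones with `m - 2` and `μ2` in place of `m` and `μ1`, so the same identity gives
`1 - δ1 + (γ2 - 1) (1 - a1) = (1 - δ1) (γ2 - δ1) / (γ2 - m + 1)`. Dividing,
`k1 = k0 (1 + 1 / (γ2 - m))`, and `γ2 > m`. For the limit, `k` is a quotient of two expressions
affine in `δ3`, and `δ3 → -∞` while `η → 0`.
-/

open Filter Topology Bornology

section CharacteristicRoots

/-- The smaller root of the characteristic equation `σ x (x - m) = a`; it gives `δ1` for
`a = ρ - μ1` and `δ3` for `a = ρ + λ0 + λ1 - μ1`. -/
noncomputable def smallerCharRoot (σ m a : ℝ) : ℝ := (m - √(m ^ 2 + 4 * a / σ)) / 2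

/-- The larger root of the characteristic equation `σ x (x - m) = a`; it gives `γ2` for
`a = ρ + λ0 - μ1`. -/
noncomputable def largerCharRoot (σ m a : ℝ) : ℝ := (m + √(m ^ 2 + 4 * a / σ)) / 2

variable {σ m a : ℝ}

lemma mul_smallerCharRoot_mul_sub (hσ : σ ≠ 0) (ha : 0 ≤ m ^ 2 + 4 * a / σ) :
    σ * (smallerCharRoot σ m a * (smallerCharRoot σ m a - m)) = a := by
  unfold smallerCharRoot
  linear_combination σ / 4 * Real.sq_sqrt ha + mul_div_cancel₀ a hσ

lemma mul_largerCharRoot_mul_sub (hσ : σ ≠ 0) (ha : 0 ≤ m ^ 2 + 4 * a / σ) :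
    σ * (largerCharRoot σ m a * (largerCharRoot σ m a - m)) = a := by
  unfold largerCharRoot
  linear_combination σ / 4 * Real.sq_sqrt ha + mul_div_cancel₀ a hσ

lemma abs_lt_sqrt_sq_add {x c : ℝ} (hc : 0 < c) : |x| < √(x ^ 2 + c) := by
  rw [Real.lt_sqrt (abs_nonneg x), sq_abs]
  exact lt_add_of_pos_right _ hc

lemma smallerCharRoot_neg (h : 0 < 4 * a / σ) : smallerCharRoot σ m a < 0 := by
  have := (abs_lt.mp (abs_lt_sqrt_sq_add (x := m) h)).2
  unfold smallerCharRoot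
  linarith

lemma largerCharRoot_pos (h : 0 < 4 * a / σ) : 0 < largerCharRoot σ m a := by
  have := (abs_lt.mp (abs_lt_sqrt_sq_add (x := m) h)).1
  unfold largerCharRoot
  linarith

lemma lt_largerCharRoot (h : 0 < 4 * a / σ) : m < largerCharRoot σ m a := by
  have := (abs_lt.mp (abs_lt_sqrt_sq_add (x := m) h)).2
  unfold largerCharRoot
  linarith

lemma tendsto_smallerCharRoot_atTop (hσ : 0 < σ) :
    Tendsto (smallerCharRoot σ m) atTop atBot := by
  have hdisc : Tendsto (fun a : ℝ => m ^ 2 + 4 * a / σ) atTop atTop :=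
    tendsto_atTop_add_const_left _ _
      ((tendsto_id.const_mul_atTop four_pos).atTop_div_const hσ)
  have hsqrt := Real.tendsto_sqrt_atTop.comp hdisc
  exact (tendsto_atBot_add_const_left _ m (tendsto_neg_atTop_atBot.comp hsqrt)).atBot_div_const
    two_pos

end CharacteristicRoots

section Threshold

/-- The threshold `k(λ0, λ1)` without the factor `β_s / β_b`, where `γ`, `δ` and `δ'` stand for
`γ2`, `δ1` and `δ3`. -/
noncomputable def normalizedThreshold (a₀ a₁ γ δ δ' η : ℝ) : ℝ :=
  (δ * δ' * (1 + η) - (δ' + η * δ) * γ - a₀ * (δ - δ') * γ) /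
    ((1 + η) * (δ * δ' + γ) - (δ' + η * δ) * γ - (δ + η * δ') - a₁ * (γ - 1) * (δ - δ'))

/-- The limiting threshold `k1` without the factor `β_s / β_b`, where `γ` and `δ` stand for `γ2`
and `δ1`. -/
noncomputable def normalizedLimitThreshold (a₀ a₁ γ δ : ℝ) : ℝ :=
  (-δ + γ * (1 - a₀)) / (1 - δ + (γ - 1) * (1 - a₁))

lemma tendsto_affine_div_affine {ι 𝕜 : Type*} [NormedField 𝕜] {l : Filter ι}
    {x p q r s : ι → 𝕜} {P Q R S : 𝕜} (hx : Tendsto x l (cobounded 𝕜))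
    (hp : Tendsto p l (𝓝 P)) (hq : Tendsto q l (𝓝 Q))
    (hr : Tendsto r l (𝓝 R)) (hs : Tendsto s l (𝓝 S)) (hR : R ≠ 0) :
    Tendsto (fun i => (p i * x i + q i) / (r i * x i + s i)) l (𝓝 (P / R)) := by
  have hinv : Tendsto (fun i => (x i)⁻¹) l (𝓝 0) := tendsto_inv₀_cobounded.comp hx
  have hnum : Tendsto (fun i => p i + q i * (x i)⁻¹) l (𝓝 P) := by
    simpa only [mul_zero, add_zero] using hp.add (hq.mul hinv)
  have hden : Tendsto (fun i => r i + s i * (x i)⁻¹) l (𝓝 R) := by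
    simpa only [mul_zero, add_zero] using hr.add (hs.mul hinv)
  refine (hnum.div hden hR).congr' ?_
  filter_upwards [hx.eventually (eventually_ne_cobounded 0)] with i hi
  rw [Pi.div_apply, ← mul_div_mul_right _ _ hi, add_mul, add_mul, inv_mul_cancel_right₀ hi,
    inv_mul_cancel_right₀ hi]

lemma tendsto_normalizedThreshold {ι : Type*} {l : Filter ι} {a₀ a₁ γ δ : ℝ} {δ' η : ι → ℝ}
    (hδ' : Tendsto δ' l (cobounded ℝ)) (hη : Tendsto η l (𝓝 0))
    (hden : 1 - δ + (γ - 1) * (1 - a₁) ≠ 0) :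
    Tendsto (fun i => normalizedThreshold a₀ a₁ γ δ (δ' i) (η i)) l
      (𝓝 (normalizedLimitThreshold a₀ a₁ γ δ)) := by
  have coeff {f : ℝ → ℝ} (hf : Continuous f) : Tendsto (fun i => f (η i)) l (𝓝 (f 0)) :=
    (hf.tendsto 0).comp hη
  have hlim := tendsto_affine_div_affine hδ'
    (coeff (f := fun t => δ * (1 + t) - γ + a₀ * γ) (by fun_prop))
    (coeff (f := fun t => -(t + a₀) * δ * γ) (by fun_prop))
    (coeff (f := fun t => (1 + t) * δ - γ - t + a₁ * (γ - 1)) (by fun_prop))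
    (coeff (f := fun t => (1 + t) * γ - t * δ * γ - δ - a₁ * (γ - 1) * δ) (by fun_prop))
    (fun h => hden (by linear_combination -h))
  convert hlim using 2
  · unfold normalizedThreshold
    congr 1 <;> ring
  · rw [normalizedLimitThreshold, ← neg_div_neg_eq]
    congr 1 <;> ring

end Threshold

section ClosedForm

variable {μ1 μ2 μ ρ σ lam m δ γ : ℝ}

lemma neg_add_mul_one_sub_div_eq (hδ : σ * (δ * (δ - m)) = ρ - μ)
    (hγ : σ * (γ * (γ - m)) = ρ + lam - μ) (hμ : ρ + lam - μ ≠ 0) :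
    -δ + γ * (1 - lam / (ρ + lam - μ)) = -δ * (γ - δ) / (γ - m) := by
  have hratio : 1 - lam / (ρ + lam - μ) = σ * (δ * (δ - m)) / (σ * (γ * (γ - m))) := by
    rw [hδ, hγ, one_sub_div hμ]
    ring
  obtain ⟨hσ, hγ₀, hγm⟩ : σ ≠ 0 ∧ γ ≠ 0 ∧ γ - m ≠ 0 := by
    simpa only [← hγ, mul_ne_zero_iff] using hμ
  rw [hratio]
  field_simp
  ring

lemma charEq_sub_one {r x : ℝ} (hσ : σ ≠ 0) (hm : m = 1 + (μ1 - μ2) / σ)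
    (hx : σ * (x * (x - m)) = r - μ1) :
    σ * ((x - 1) * ((x - 1) - (m - 2))) = r - μ2 := by
  have hσm : σ * m = σ + (μ1 - μ2) := by rw [hm]; field_simp
  linear_combination hx + hσm

lemma one_sub_add_mul_one_sub_div_eq (hσ : σ ≠ 0) (hm : m = 1 + (μ1 - μ2) / σ)
    (hδ : σ * (δ * (δ - m)) = ρ - μ1) (hγ : σ * (γ * (γ - m)) = ρ + lam - μ1)
    (hμ2 : ρ + lam - μ2 ≠ 0) :
    1 - δ + (γ - 1) * (1 - lam / (ρ + lam - μ2)) = (1 - δ) * (γ - δ) / (γ - m + 1) := by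
  have h := neg_add_mul_one_sub_div_eq (charEq_sub_one hσ hm hδ) (charEq_sub_one hσ hm hγ) hμ2
  convert h using 1 <;> ring

lemma one_sub_add_mul_one_sub_div_pos (hσ : σ ≠ 0) (hm : m = 1 + (μ1 - μ2) / σ)
    (hδ : σ * (δ * (δ - m)) = ρ - μ1) (hγ : σ * (γ * (γ - m)) = ρ + lam - μ1)
    (hμ2 : ρ + lam - μ2 ≠ 0) (hδγ : δ < γ) (hδ₁ : δ < 1) (hγm : m < γ + 1) :
    0 < 1 - δ + (γ - 1) * (1 - lam / (ρ + lam - μ2)) := by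
  rw [one_sub_add_mul_one_sub_div_eq hσ hm hδ hγ hμ2]
  exact div_pos (mul_pos (sub_pos.mpr hδ₁) (sub_pos.mpr hδγ)) (by linarith)

lemma normalizedLimitThreshold_eq (hm : m = 1 + (μ1 - μ2) / σ)
    (hδ : σ * (δ * (δ - m)) = ρ - μ1) (hγ : σ * (γ * (γ - m)) = ρ + lam - μ1)
    (hμ1 : ρ + lam - μ1 ≠ 0) (hμ2 : ρ + lam - μ2 ≠ 0) (hδγ : δ ≠ γ) :
    normalizedLimitThreshold (lam / (ρ + lam - μ1)) (lam / (ρ + lam - μ2)) γ δ =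
      -δ / (1 - δ) * (1 + 1 / (γ - m)) := by
  obtain ⟨hσ, -, hγm⟩ : σ ≠ 0 ∧ γ ≠ 0 ∧ γ - m ≠ 0 := by
    simpa only [← hγ, mul_ne_zero_iff] using hμ1
  rw [normalizedLimitThreshold, neg_add_mul_one_sub_div_eq hδ hγ hμ1,
    one_sub_add_mul_one_sub_div_eq hσ hm hδ hγ hμ2, one_add_div hγm, div_div_div_eq,
    div_mul_div_comm, ← mul_div_mul_right _ ((1 - δ) * (γ - m)) (sub_ne_zero.mpr hδγ.symm)]
  congr 1 <;> ring

lemma lt_normalizedLimitThreshold (hm : m = 1 + (μ1 - μ2) / σ)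
    (hδ : σ * (δ * (δ - m)) = ρ - μ1) (hγ : σ * (γ * (γ - m)) = ρ + lam - μ1)
    (hμ1 : ρ + lam - μ1 ≠ 0) (hμ2 : ρ + lam - μ2 ≠ 0) (hδ₀ : δ < 0) (hγ₀ : 0 < γ) (hγm : m < γ) :
    -δ / (1 - δ) <
      normalizedLimitThreshold (lam / (ρ + lam - μ1)) (lam / (ρ + lam - μ2)) γ δ := by
  have hbase : 0 < -δ / (1 - δ) := div_pos (by linarith) (by linarith)
  have hfactor : 1 < 1 + 1 / (γ - m) :=
    lt_add_of_pos_right _ (one_div_pos.mpr (sub_pos.mpr hγm))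
  rw [normalizedLimitThreshold_eq hm hδ hγ hμ1 hμ2 (hδ₀.trans hγ₀).ne]
  exact lt_mul_of_one_lt_right hbase hfactor

end ClosedForm

theorem stmt_19_general {μ1 μ2 ρ σ lam0 β a0 a1 m δ1 γ2 : ℝ} {η δ3 k : ℝ → ℝ}
    (hσ : 0 < σ) (hβ : 0 < β) (hμ1 : μ1 < ρ) (hlamμ1 : μ1 < ρ + lam0) (hlamμ2 : μ2 ≠ ρ + lam0)
    (ha0 : a0 = lam0 / (ρ + lam0 - μ1)) (ha1 : a1 = lam0 / (ρ + lam0 - μ2))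
    (hm : m = 1 + (μ1 - μ2) / σ)
    (hδ1 : δ1 = smallerCharRoot σ m (ρ - μ1))
    (hγ2 : γ2 = largerCharRoot σ m (ρ + lam0 - μ1))
    (hη : ∀ l : ℝ, 0 < l → η l = lam0 / l)
    (hδ3 : ∀ l : ℝ, 0 < l → δ3 l = smallerCharRoot σ m (ρ + lam0 + l - μ1))
    (hk : ∀ l : ℝ, 0 < l → k l = normalizedThreshold a0 a1 γ2 δ1 (δ3 l) (η l) * β) :
    Tendsto k atTop (𝓝 (normalizedLimitThreshold a0 a1 γ2 δ1 * β)) ∧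
      -δ1 / (1 - δ1) * β < normalizedLimitThreshold a0 a1 γ2 δ1 * β := by
  have hs : 0 < 4 * (ρ - μ1) / σ := div_pos (mul_pos four_pos (sub_pos.mpr hμ1)) hσ
  have ht : 0 < 4 * (ρ + lam0 - μ1) / σ := div_pos (mul_pos four_pos (sub_pos.mpr hlamμ1)) hσ
  have hδ1_eq : σ * (δ1 * (δ1 - m)) = ρ - μ1 :=
    hδ1 ▸ mul_smallerCharRoot_mul_sub hσ.ne' (by positivity)
  have hγ2_eq : σ * (γ2 * (γ2 - m)) = ρ + lam0 - μ1 :=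
    hγ2 ▸ mul_largerCharRoot_mul_sub hσ.ne' (by positivity)
  have hδ1_neg : δ1 < 0 := hδ1 ▸ smallerCharRoot_neg hs
  have hγ2_pos : 0 < γ2 := hγ2 ▸ largerCharRoot_pos ht
  have hγ2_gt : m < γ2 := hγ2 ▸ lt_largerCharRoot ht
  have hμ1_ne : ρ + lam0 - μ1 ≠ 0 := (sub_pos.mpr hlamμ1).ne'
  have hμ2_ne : ρ + lam0 - μ2 ≠ 0 := sub_ne_zero.mpr hlamμ2.symm
  subst a0 a1
  constructor
  · have eventuallyEq {f g : ℝ → ℝ} (h : ∀ l : ℝ, 0 < l → f l = g l) : g =ᶠ[atTop] f :=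
      (eventually_gt_atTop 0).mono fun l hl => (h l hl).symm
    have hden := one_sub_add_mul_one_sub_div_pos hσ.ne' hm hδ1_eq hγ2_eq hμ2_ne
      (by linarith) (by linarith) (by linarith)
    have hη_lim : Tendsto η atTop (𝓝 0) :=
      (tendsto_id.const_div_atTop lam0).congr' (eventuallyEq hη)
    have harg : Tendsto (fun l => ρ + lam0 + l - μ1) atTop atTop :=
      tendsto_atTop_add_const_right _ _ (tendsto_atTop_add_const_left _ _ tendsto_id)
    have hδ3_lim : Tendsto δ3 atTop atBot :=
      ((tendsto_smallerCharRoot_atTop hσ).comp harg).congr' (eventuallyEq hδ3)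
    have hδ3_cobounded := hδ3_lim.mono_right IsOrderBornology.atBot_le_cobounded
    exact ((tendsto_normalizedThreshold hδ3_cobounded hη_lim hden.ne').mul_const β).congr'
      (eventuallyEq hk)
  · exact mul_lt_mul_of_pos_right
      (lt_normalizedLimitThreshold hm hδ1_eq hγ2_eq hμ1_ne hμ2_ne hδ1_neg hγ2_pos hγ2_gt) hβ

theorem stmt_19 (μ1 μ2 ρ σ lam0 K βs βb a0 a1 m δ1 γ2 : ℝ)
    (η δ3 kf : ℝ → ℝ)
    (hσ : 0 < σ) (hlam0 : 0 < lam0) (hμ1 : μ1 < ρ) (hμ2 : μ2 < ρ)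
    (hK0 : 0 < K) (hK1 : K < 1) (hβs : βs = 1 - K) (hβb : βb = 1 + K)
    (ha0 : a0 = lam0 / (ρ + lam0 - μ1)) (ha1 : a1 = lam0 / (ρ + lam0 - μ2))
    (hm : m = 1 + (μ1 - μ2) / σ)
    (hδ1 : δ1 = (m - Real.sqrt (m ^ 2 + 4 * (ρ - μ1) / σ)) / 2)
    (hγ2 : γ2 = (m + Real.sqrt (m ^ 2 + 4 * (ρ + lam0 - μ1) / σ)) / 2)
    (hη : ∀ l : ℝ, 0 < l → η l = lam0 / l)
    (hδ3 : ∀ l : ℝ, 0 < l → δ3 l = (m - Real.sqrt (m ^ 2 + 4 * (ρ + lam0 + l - μ1) / σ)) / 2)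
    (hk : ∀ l : ℝ, 0 < l → kf l =
      (δ1 * δ3 l * (1 + η l) - (δ3 l + η l * δ1) * γ2 - a0 * (δ1 - δ3 l) * γ2) /
        ((1 + η l) * (δ1 * δ3 l + γ2) - (δ3 l + η l * δ1) * γ2 - (δ1 + η l * δ3 l) -
          a1 * (γ2 - 1) * (δ1 - δ3 l)) *
        (βs / βb)) :
    Filter.Tendsto kf Filter.atTop
        (nhds ((-δ1 + γ2 * (1 - a0)) / (1 - δ1 + (γ2 - 1) * (1 - a1)) * (βs / βb))) ∧
      (-δ1 + γ2 * (1 - a0)) / (1 - δ1 + (γ2 - 1) * (1 - a1)) * (βs / βb) >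
        -δ1 / (1 - δ1) * (βs / βb) :=
  stmt_19_general hσ (by rw [hβs, hβb]; exact div_pos (by linarith) (by linarith)) hμ1 (by linarith)
    (by linarith : μ2 < ρ + lam0).ne ha0 ha1 hm hδ1 hγ2 hη hδ3 hk
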